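/- arXiv:2205.06412 — 2 statements merged into one kernel-verified Lean document; each statement's English description precedes it below -/
import Mathlib

section
/- Fix K ≥ 1, channel matrices H_k ∈ ℂ^{n_k×n_t} (k = 1,…,K) and G ∈ ℂ^{n_e×n_t}, a power budget P ≥ 0, and equal weights w_1 = w_2 = … = w_K = w ≥ 0. For a permutation σ of {1,…,K}, let φ_σ be the supremum of Σ_{k=1}^K w·R_{σ_k} over all K-tuples (Q_1,…,Q_K) of Hermitian positive semidefinite n_t×n_t complex matrices satisfying Σ_{k=1}^K tr(Q_k) ≤ P and R_{σ_k} ≥ 0 for every k. Then φ_σ = φ_τ for any two permutations σ and τ of {1,…,K}; i.e., all encoding orders yield the same optimal secrecy sum rate. -/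
/-!
Drop the constraint that every single rate be nonnegative. For `P > 0`, a maximizer `q` of the
relaxed problem satisfies the Karush-Kuhn-Tucker conditions: there are positive semidefinite slack
matrices `Φ k` with `Φ k * q k = 0` whose sum with the gradient of the sum rate at position `k` is
a multiple of the identity. Going through the positions in order, the resolvent identity shows that
`Φ k` plus the gradient of the legitimate user's log-determinant dominates the gradient of the
eavesdropper's, and this forces each rate at `q` to be nonnegative. So the constraint is automatic
at the optimum.

The set of relaxed sum rates does not depend on the encoding order. The eavesdropper's terms
telescope, and adjacent transpositions generate all permutations, so it is enough to exchange two
consecutive users while keeping their total covariance and the sum of their rates. The matrices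
needed come from a geometric mean, a Hermitian `W` with `W X W = Y⁻¹` and `W Y W = X⁻¹`.
-/

open Matrix Finset ComplexOrder

/-- `log det(I + B)` for a complex square matrix `B` (real part of the determinant,
which is real when `B` is positive semidefinite). -/
noncomputable def logdetI {m : ℕ} (B : Matrix (Fin m) (Fin m) ℂ) : ℝ :=
  Real.log ((1 + B).det.re)

/-- Secrecy rate of the user at position `k` under encoding order `π`. -/
noncomputable def secrecyRate {K nt ne : ℕ} {n : Fin K → ℕ}
    (H : ∀ k : Fin K, Matrix (Fin (n k)) (Fin nt) ℂ)
    (G : Matrix (Fin ne) (Fin nt) ℂ) (π : Equiv.Perm (Fin K))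
    (Q : Fin K → Matrix (Fin nt) (Fin nt) ℂ) (k : Fin K) : ℝ :=
  logdetI (H (π k) * (∑ j ∈ Finset.univ.filter (fun j => k ≤ j), Q (π j)) * (H (π k))ᴴ)
    - logdetI (H (π k) * (∑ j ∈ Finset.univ.filter (fun j => k < j), Q (π j)) * (H (π k))ᴴ)
    - logdetI (G * (∑ j ∈ Finset.univ.filter (fun j => k ≤ j), Q (π j)) * Gᴴ)
    + logdetI (G * (∑ j ∈ Finset.univ.filter (fun j => k < j), Q (π j)) * Gᴴ)

/-- Optimal weighted secrecy sum rate under encoding order `π`, power budget `P`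
and weights `w`. -/
noncomputable def phi {K nt ne : ℕ} {n : Fin K → ℕ}
    (H : ∀ k : Fin K, Matrix (Fin (n k)) (Fin nt) ℂ)
    (G : Matrix (Fin ne) (Fin nt) ℂ) (P : ℝ) (w : Fin K → ℝ)
    (π : Equiv.Perm (Fin K)) : ℝ :=
  sSup {r : ℝ | ∃ Q : Fin K → Matrix (Fin nt) (Fin nt) ℂ,
    (∀ k, (Q k).PosSemidef) ∧ (∑ k, ((Q k).trace).re) ≤ P ∧
    (∀ k, 0 ≤ secrecyRate H G π Q k) ∧
    r = ∑ k, w (π k) * secrecyRate H G π Q k}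

section LoewnerOrder

variable {n 𝕜 : Type*} [Fintype n] [RCLike 𝕜]

lemma exists_eq_mul_conjTranspose {A : Matrix n n 𝕜} (hA : A.PosSemidef) :
    ∃ L : Matrix n n 𝕜, A = L * Lᴴ := by
  classical
  open scoped MatrixOrder in
  obtain ⟨B, hB⟩ := CStarAlgebra.nonneg_iff_eq_star_mul_self.mp hA.nonneg
  exact ⟨Bᴴ, by simpa [star_eq_conjTranspose] using hB⟩

variable [DecidableEq n]

lemma one_le_det_one_add {A : Matrix n n 𝕜} (hA : A.PosSemidef) : 1 ≤ (1 + A).det := by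
  have hU : star (hA.1.eigenvectorUnitary : Matrix n n 𝕜) * hA.1.eigenvectorUnitary = 1 :=
    Unitary.coe_star_mul_self _
  rw [hA.1.spectral_theorem, Unitary.conjStarAlgAut_apply, det_one_add_mul_comm, ← mul_assoc, hU,
    one_mul, ← diagonal_one, diagonal_add, det_diagonal]
  refine Finset.one_le_prod fun i _ => ?_
  simpa using hA.eigenvalues_nonneg i

/- `det (A + L Lᴴ) = det A * det (1 + Lᴴ A⁻¹ L)`. -/
lemma det_le_det_of_posSemidef_sub {A B : Matrix n n 𝕜} (hA : A.PosDef)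
    (hAB : (B - A).PosSemidef) : A.det ≤ B.det := by
  obtain ⟨L, hL⟩ := exists_eq_mul_conjTranspose hAB
  rw [← add_sub_cancel A B, hL, det_add_mul _ _ ((isUnit_iff_isUnit_det _).1 hA.isUnit)]
  exact le_mul_of_one_le_right hA.det_pos.le
    (one_le_det_one_add (hA.inv.posSemidef.conjTranspose_mul_mul_same L))

lemma det_one_add_mul_pos {A B : Matrix n n 𝕜} (hA : A.PosSemidef) (hB : B.PosSemidef) :
    0 < (1 + A * B).det := by
  obtain ⟨L, rfl⟩ := exists_eq_mul_conjTranspose hB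
  rw [← mul_assoc, det_one_add_mul_comm, ← mul_assoc]
  exact (PosDef.one.add_posSemidef (hA.conjTranspose_mul_mul_same L)).det_pos

lemma det_one_add_mul_le_of_posSemidef_sub {A B C : Matrix n n 𝕜} (hA : A.PosSemidef)
    (hAB : (B - A).PosSemidef) (hC : C.PosSemidef) : (1 + A * C).det ≤ (1 + B * C).det := by
  obtain ⟨L, rfl⟩ := exists_eq_mul_conjTranspose hC
  have hconj (X : Matrix n n 𝕜) : (1 + X * (L * Lᴴ)).det = (1 + Lᴴ * X * L).det := by
    rw [← mul_assoc, det_one_add_mul_comm, mul_assoc]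
  rw [hconj, hconj]
  refine det_le_det_of_posSemidef_sub
    (PosDef.one.add_posSemidef (hA.conjTranspose_mul_mul_same L)) ?_
  rw [add_sub_add_left_eq_sub, ← sub_mul, ← mul_sub]
  exact hAB.conjTranspose_mul_mul_same L

/- The relation `(1 + T * q) * T' = T` says `T' = (T⁻¹ + q)⁻¹` for invertible `T`. -/
lemma posSemidef_sub_of_resolvent_sub {T T' N N' q : Matrix n n 𝕜} (hT : T.PosSemidef)
    (hN : N.IsHermitian) (hN' : N'.IsHermitian) (hq : q.PosSemidef) (hTq : (1 + T * q) * T' = T)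
    (hNq : (1 + N * q) * N' = N) (h : (T' - N').PosSemidef) : (T - N).PosSemidef := by
  set E := (T' - N') * (1 + q * N) with hE
  have hNq' : N' * (1 + q * N) = N := by
    simpa [hN.eq, hN'.eq, hq.1.eq] using congrArg conjTranspose hNq
  have hD : T - N = (1 + T * q) * E := by
    rw [hE, sub_mul, hNq', mul_sub, ← mul_assoc, hTq]
    noncomm_ring
  have hD' : T - N = Eᴴ * (1 + q * T) := by
    simpa [hT.1.eq, hN.eq, hq.1.eq] using congrArg conjTranspose hD
  have hsum : T - N =
      (1 + N * q) * (T' - N') * (1 + N * q)ᴴ + Eᴴ * (q + qᴴ * T * q) * E := by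
    calc T - N = (1 + T * q) * E := hD
      _ = (1 + N * q) * E + (T - N) * (q * E) := by noncomm_ring
      _ = (1 + N * q) * E + Eᴴ * (1 + q * T) * (q * E) := by rw [hD']
      _ = _ := by
        simp only [hE, conjTranspose_add, conjTranspose_one, conjTranspose_mul, hN.eq, hq.1.eq]
        noncomm_ring
  rw [hsum]
  exact (h.mul_mul_conjTranspose_same _).add
    ((hq.add (hT.conjTranspose_mul_mul_same q)).conjTranspose_mul_mul_same E)

end LoewnerOrder

section Exchange

variable {m n 𝕜 : Type*} [Fintype m] [Fintype n] [DecidableEq m] [RCLike 𝕜]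

lemma isStarProjection_mul_inv_mul_conjTranspose {V : Matrix n m 𝕜} (hV : IsUnit (Vᴴ * V).det) :
    IsStarProjection (V * (Vᴴ * V)⁻¹ * Vᴴ) where
  isIdempotentElem := by
    calc _ = V * ((Vᴴ * V)⁻¹ * (Vᴴ * V)) * (Vᴴ * V)⁻¹ * Vᴴ := by simp only [Matrix.mul_assoc]
      _ = _ := by rw [nonsing_inv_mul _ hV, Matrix.mul_one]
  isSelfAdjoint := by
    simp [IsSelfAdjoint, star_eq_conjTranspose, conjTranspose_nonsing_inv, Matrix.mul_assoc]

variable [DecidableEq n]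

/- `W` is the geometric mean of `X⁻¹` and `Y⁻¹`. -/
lemma exists_isHermitian_mul_mul_eq_inv {X Y : Matrix n n 𝕜} (hX : X.PosDef) (hY : Y.PosDef) :
    ∃ W : Matrix n n 𝕜, W.IsHermitian ∧ W * X * W = Y⁻¹ ∧ W * Y * W = X⁻¹ := by
  obtain ⟨M, hM⟩ := exists_eq_mul_conjTranspose hX.inv.posSemidef
  obtain ⟨T, hT, hTT⟩ : ∃ T : Matrix n n 𝕜, T.IsHermitian ∧ T * T = M⁻¹ * Y⁻¹ * (M⁻¹)ᴴ := by
    open scoped MatrixOrder in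
    have hpos := (hY.inv.posSemidef.mul_mul_conjTranspose_same M⁻¹).nonneg
    exact ⟨CFC.sqrt _, (CFC.sqrt_nonneg _).posSemidef.1, CFC.sqrt_mul_sqrt_self _ hpos⟩
  have hXM : X * M * Mᴴ = 1 := by
    rw [mul_assoc, ← hM, mul_nonsing_inv _ ((isUnit_iff_isUnit_det _).1 hX.isUnit)]
  have hMXM : Mᴴ * X * M = 1 := by
    rw [mul_assoc, mul_eq_one_comm.1 hXM]
  have hMu : IsUnit M.det := isUnit_det_of_left_inverse hMXM
  have hW : (M * T * Mᴴ) * X * (M * T * Mᴴ) = Y⁻¹ := by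
    calc (M * T * Mᴴ) * X * (M * T * Mᴴ) = M * (T * (Mᴴ * X * M) * T) * Mᴴ := by noncomm_ring
      _ = M * M⁻¹ * Y⁻¹ * (M * M⁻¹)ᴴ := by
        rw [hMXM, mul_one, hTT, conjTranspose_mul]
        noncomm_ring
      _ = Y⁻¹ := by rw [mul_nonsing_inv _ hMu, conjTranspose_one, one_mul, mul_one]
  generalize hWdef : M * T * Mᴴ = W at hW
  refine ⟨W, ?_, hW, ?_⟩
  · simp [IsHermitian, ← hWdef, hT.eq, mul_assoc]
  · have hinv : W * (X * W * Y) = 1 := by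
      rw [← mul_assoc, ← mul_assoc, hW, nonsing_inv_mul _ ((isUnit_iff_isUnit_det _).1 hY.isUnit)]
    refine (inv_eq_right_inv ?_).symm
    simpa only [mul_assoc] using mul_eq_one_comm.1 hinv

lemma det_one_add_mul_one_sub_mul_conjTranspose {X : Matrix n n 𝕜} (hX : IsUnit X.det)
    {F : Matrix n m 𝕜} (hF : Fᴴ * F = 1) :
    (1 + (X - 1) * (1 - F * Fᴴ)).det = X.det * (Fᴴ * X⁻¹ * F).det := by
  have hfac : 1 + (X - 1) * (1 - F * Fᴴ) = X + ((1 - X) * F) * Fᴴ := by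
    rw [Matrix.mul_assoc]
    noncomm_ring
  rw [hfac, det_add_mul _ _ hX]
  congr 2
  calc 1 + Fᴴ * X⁻¹ * ((1 - X) * F) = 1 + Fᴴ * (X⁻¹ - X⁻¹ * X) * F := by
        simp only [Matrix.mul_assoc, Matrix.sub_mul, Matrix.mul_sub, Matrix.one_mul]
    _ = Fᴴ * X⁻¹ * F := by
        rw [nonsing_inv_mul _ hX, Matrix.mul_sub, Matrix.sub_mul, Matrix.mul_one, hF,
          add_sub_cancel]

lemma det_one_add_mul_mul_inv_mul_conjTranspose (X : Matrix n n 𝕜) {V : Matrix n m 𝕜}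
    (hV : IsUnit (Vᴴ * V).det) :
    (Vᴴ * V).det * (1 + (X - 1) * (V * (Vᴴ * V)⁻¹ * Vᴴ)).det = (Vᴴ * X * V).det := by
  have hcomm : (1 + (X - 1) * (V * (Vᴴ * V)⁻¹ * Vᴴ)).det =
      (1 + (Vᴴ * V)⁻¹ * (Vᴴ * (X - 1) * V)).det := by
    rw [Matrix.mul_assoc V, ← Matrix.mul_assoc, det_one_add_mul_comm]
    simp only [Matrix.mul_assoc]
  rw [hcomm, ← det_mul, mul_add, mul_one, mul_nonsing_inv_cancel_left _ _ hV]
  simp only [Matrix.mul_sub, Matrix.sub_mul, Matrix.mul_one, add_sub_cancel]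

/- The projection is the one onto the range of `W * F`, where `W * X * W = Y⁻¹` and
`W * Y * W = X⁻¹`. -/
lemma exists_isStarProjection_det_mul_det_mul_det {X Y : Matrix n n 𝕜} (hX : X.PosDef)
    (hY : Y.PosDef) {F : Matrix n m 𝕜} (hF : Fᴴ * F = 1) :
    ∃ Z : Matrix n n 𝕜, IsStarProjection Z ∧
      X.det * (1 + (Y - 1) * (1 - F * Fᴴ)).det * (1 + (Y - 1) * Z).det =
        Y.det * (1 + (X - 1) * (1 - F * Fᴴ)).det * (1 + (X - 1) * Z).det := by
  obtain ⟨W, hW, hWX, hWY⟩ := exists_isHermitian_mul_mul_eq_inv hX hY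
  have hXu := (isUnit_iff_isUnit_det _).1 hX.isUnit
  have hYu := (isUnit_iff_isUnit_det _).1 hY.isUnit
  have hconj (A : Matrix n n 𝕜) : (W * F)ᴴ * A * (W * F) = Fᴴ * (W * A * W) * F := by
    simp only [conjTranspose_mul, hW.eq, Matrix.mul_assoc]
  have hleft : (Fᴴ * (Y * W * X)) * (W * F) = 1 := by
    calc _ = Fᴴ * (Y * (W * X * W)) * F := by simp only [Matrix.mul_assoc]
      _ = 1 := by rw [hWX, mul_nonsing_inv _ hYu, Matrix.mul_one, hF]
  have hinj : Function.Injective (W * F).mulVec :=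
    Function.LeftInverse.injective (g := (Fᴴ * (Y * W * X)).mulVec) fun x => by
      rw [mulVec_mulVec, hleft, one_mulVec]
  have hV := (isUnit_iff_isUnit_det _).1 (PosDef.conjTranspose_mul_self _ hinj).isUnit
  refine ⟨_, isStarProjection_mul_inv_mul_conjTranspose hV, mul_left_cancel₀ hV.ne_zero ?_⟩
  have hZX := det_one_add_mul_mul_inv_mul_conjTranspose X hV
  have hZY := det_one_add_mul_mul_inv_mul_conjTranspose Y hV
  rw [hconj, hWX] at hZX
  rw [hconj, hWY] at hZY
  rw [mul_left_comm, hZY, mul_left_comm, hZX, det_one_add_mul_one_sub_mul_conjTranspose hXu hF,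
    det_one_add_mul_one_sub_mul_conjTranspose hYu hF]
  ring

lemma exists_add_eq_det_mul_det_mul_det {A B q₁ q₂ : Matrix n n 𝕜} (hA : A.PosSemidef)
    (hB : B.PosSemidef) (hq₁ : q₁.PosSemidef) (hq₂ : q₂.PosSemidef) :
    ∃ q₁' q₂' : Matrix n n 𝕜, q₁'.PosSemidef ∧ q₂'.PosSemidef ∧ q₂' + q₁' = q₁ + q₂ ∧
      (1 + A * (q₁ + q₂)).det * (1 + B * q₁).det * (1 + B * q₂').det =
        (1 + B * (q₁ + q₂)).det * (1 + A * q₁).det * (1 + A * q₂').det := by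
  obtain ⟨L₁, hL₁⟩ := exists_eq_mul_conjTranspose hq₁
  obtain ⟨L₂, hL₂⟩ := exists_eq_mul_conjTranspose hq₂
  set R := fromCols L₁ L₂ with hRdef
  set F : Matrix (n ⊕ n) n 𝕜 := fromRows 0 1 with hFdef
  have hF : Fᴴ * F = 1 := by
    simp [hFdef, conjTranspose_fromRows_eq_fromCols_conjTranspose, fromCols_mul_fromRows]
  have hRR : R * Rᴴ = q₁ + q₂ := by
    rw [conjTranspose_fromCols_eq_fromRows_conjTranspose, fromCols_mul_fromRows, hL₁, hL₂]
  have hRF : R * F = L₂ := by simp [hRdef, hFdef, fromCols_mul_fromRows]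
  have hRFR : R * (1 - F * Fᴴ) * Rᴴ = q₁ := by
    calc R * (1 - F * Fᴴ) * Rᴴ = R * Rᴴ - (R * F) * (R * F)ᴴ := by
          simp only [conjTranspose_mul, Matrix.mul_sub, Matrix.sub_mul, Matrix.mul_one,
            Matrix.mul_assoc]
      _ = q₁ := by rw [hRR, hRF, ← hL₂, add_sub_cancel_right]
  have hdet (C : Matrix n n 𝕜) (Z : Matrix (n ⊕ n) (n ⊕ n) 𝕜) :
      (1 + C * (R * Z * Rᴴ)).det = (1 + (1 + Rᴴ * C * R - 1) * Z).det := by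
    rw [add_sub_cancel_left, ← Matrix.mul_assoc, det_one_add_mul_comm]
    simp only [Matrix.mul_assoc]
  have hdetRR (C : Matrix n n 𝕜) : (1 + C * (q₁ + q₂)).det = (1 + Rᴴ * C * R).det := by
    simpa [hRR] using hdet C 1
  obtain ⟨Z, hZ, hZdet⟩ := exists_isStarProjection_det_mul_det_mul_det
    (PosDef.one.add_posSemidef (hA.conjTranspose_mul_mul_same R))
    (PosDef.one.add_posSemidef (hB.conjTranspose_mul_mul_same R)) hF
  obtain ⟨hZ₁, hZ₂⟩ : (1 - Z).PosSemidef ∧ Z.PosSemidef := by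
    open scoped MatrixOrder in exact ⟨hZ.one_sub.nonneg.posSemidef, hZ.nonneg.posSemidef⟩
  refine ⟨R * (1 - Z) * Rᴴ, R * Z * Rᴴ, hZ₁.mul_mul_conjTranspose_same R,
    hZ₂.mul_mul_conjTranspose_same R, ?_, ?_⟩
  · rw [← hRR, ← Matrix.add_mul, ← Matrix.mul_add, add_sub_cancel, Matrix.mul_one]
  · rw [hdetRR, hdetRR, ← hRFR, hdet, hdet, hdet, hdet]
    exact hZdet

end Exchange

section Trace

variable {n 𝕜 : Type*} [Fintype n] [RCLike 𝕜]

lemma re_trace_nonneg {A : Matrix n n 𝕜} (hA : A.PosSemidef) : 0 ≤ RCLike.re A.trace :=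
  (RCLike.nonneg_iff.1 hA.trace_nonneg).1

lemma eq_zero_of_re_trace_nonpos {A : Matrix n n 𝕜} (hA : A.PosSemidef)
    (h : RCLike.re A.trace ≤ 0) : A = 0 :=
  hA.trace_eq_zero_iff.1 <| (RCLike.nonneg_iff.1 hA.trace_nonneg).elim fun hre him =>
    RCLike.ext (by simpa using h.antisymm hre) (by simpa using him)

lemma posSemidef_of_forall_re_trace_mul_nonneg {A : Matrix n n 𝕜} (hA : A.IsHermitian)
    (h : ∀ W : Matrix n n 𝕜, W.PosSemidef → 0 ≤ RCLike.re (A * W).trace) : A.PosSemidef := by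
  refine .of_dotProduct_mulVec_nonneg hA fun x => ?_
  rw [RCLike.nonneg_iff, dotProduct_comm, ← trace_vecMulVec, ← mul_vecMulVec]
  refine ⟨h _ (posSemidef_vecMulVec_self_star x), ?_⟩
  rw [mul_vecMulVec, trace_vecMulVec, dotProduct_comm, hA.im_star_dotProduct_mulVec_self]

lemma trace_mul_nonneg {A B : Matrix n n 𝕜} (hA : A.PosSemidef) (hB : B.PosSemidef) :
    0 ≤ (A * B).trace := by
  obtain ⟨L, rfl⟩ := exists_eq_mul_conjTranspose hB
  rw [← Matrix.mul_assoc, trace_mul_comm, ← Matrix.mul_assoc]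
  exact (hA.conjTranspose_mul_mul_same L).trace_nonneg

lemma mul_eq_zero_of_trace_mul_eq_zero {A B : Matrix n n 𝕜} (hA : A.PosSemidef)
    (hB : B.PosSemidef) (h : (A * B).trace = 0) : A * B = 0 := by
  obtain ⟨L, rfl⟩ := exists_eq_mul_conjTranspose hB
  obtain ⟨M, rfl⟩ := exists_eq_mul_conjTranspose hA
  have hML : (Mᴴ * L * (Mᴴ * L)ᴴ).trace = 0 := by
    rw [← h, trace_mul_comm _ (L * Lᴴ), conjTranspose_mul, conjTranspose_conjTranspose,
      Matrix.mul_assoc, trace_mul_comm]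
    simp only [Matrix.mul_assoc]
  rw [Matrix.mul_assoc, ← Matrix.mul_assoc Mᴴ, trace_mul_conjTranspose_self_eq_zero_iff.1 hML,
    Matrix.zero_mul, Matrix.mul_zero]

lemma norm_apply_sq_le_re_trace_mul_conjTranspose (L : Matrix n n 𝕜) (i j : n) :
    ‖L i j‖ ^ 2 ≤ RCLike.re (L * Lᴴ).trace := by
  have htrace : RCLike.re (L * Lᴴ).trace = ∑ i, ∑ j, ‖L i j‖ ^ 2 := by
    simp only [trace, diag_apply, Matrix.mul_apply, conjTranspose_apply, RCLike.star_def,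
      RCLike.mul_conj, map_sum, ← RCLike.ofReal_pow, RCLike.ofReal_re]
  rw [htrace]
  calc ‖L i j‖ ^ 2 ≤ ∑ j, ‖L i j‖ ^ 2 :=
        single_le_sum (f := fun j => ‖L i j‖ ^ 2) (fun _ _ => by positivity) (mem_univ j)
    _ ≤ ∑ i, ∑ j, ‖L i j‖ ^ 2 :=
        single_le_sum (f := fun i => ∑ j, ‖L i j‖ ^ 2) (fun _ _ => by positivity) (mem_univ i)

end Trace

section PowerBudget

variable {ι n 𝕜 : Type*} [Fintype ι] [Fintype n] [RCLike 𝕜]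

variable (ι n 𝕜) in
/-- The tuples of covariances meeting the total power budget `P`. -/
def budgetSet (P : ℝ) : Set (ι → Matrix n n 𝕜) :=
  {q | (∀ k, (q k).PosSemidef) ∧ ∑ k, RCLike.re (q k).trace ≤ P}

variable {P : ℝ}

lemma zero_mem_budgetSet (hP : 0 ≤ P) : 0 ∈ budgetSet ι n 𝕜 P :=
  ⟨fun _ => .zero, by simpa using hP⟩

lemma convex_budgetSet : Convex ℝ (budgetSet ι n 𝕜 P) := by
  intro q hq q' hq' s t hs ht hst
  refine ⟨fun k => ((hq.1 k).smul hs).add ((hq'.1 k).smul ht), ?_⟩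
  simp only [Pi.add_apply, Pi.smul_apply, trace_add, trace_smul, map_add, RCLike.smul_re,
    sum_add_distrib, ← mul_sum]
  exact convex_Iic P hq.2 hq'.2 hs ht hst

lemma isCompact_budgetSet : IsCompact (budgetSet ι n 𝕜 P) := by
  let gram : (ι → Matrix n n 𝕜) → ι → Matrix n n 𝕜 := fun L k => L k * (L k)ᴴ
  have hgram : Continuous gram := by fun_prop
  suffices hC : IsCompact {L | ∑ k, RCLike.re (gram L k).trace ≤ P} by
    convert hC.image hgram
    ext q
    constructor
    · rintro ⟨hq, hqP⟩
      choose L hL using fun k => exists_eq_mul_conjTranspose (hq k)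
      obtain rfl : q = gram L := funext hL
      exact ⟨L, hqP, rfl⟩
    · rintro ⟨L, hL, rfl⟩
      exact ⟨fun k => posSemidef_self_mul_conjTranspose _, hL⟩
  refine (isCompact_univ_pi fun _ => isCompact_univ_pi fun _ => isCompact_univ_pi fun _ =>
    isCompact_closedBall (0 : 𝕜) √P).of_isClosed_subset
      (isClosed_le (by fun_prop) continuous_const) fun L hL k _ i _ j _ => ?_
  rw [mem_closedBall_zero_iff]
  refine Real.le_sqrt_of_sq_le
    ((norm_apply_sq_le_re_trace_mul_conjTranspose (L k) i j).trans (le_trans ?_ hL))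
  exact single_le_sum (f := fun k => RCLike.re (gram L k).trace)
    (fun _ _ => re_trace_nonneg (posSemidef_self_mul_conjTranspose _)) (mem_univ k)

end PowerBudget

section EncodingOrder

variable {n 𝕜 : Type*} [RCLike 𝕜]

/-- Two rate functions of the total covariance are exchangeable when any split with the second user
stacked on top of the first can be replaced, without changing the total covariance or the sum of
the two rate increments, by one with the first user on top. -/
def Exchangeable (h₁ h₂ : Matrix n n 𝕜 → ℝ) : Prop :=
  ∀ ⦃S q₁ q₂ : Matrix n n 𝕜⦄, S.PosSemidef → q₁.PosSemidef → q₂.PosSemidef →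
    ∃ q₁' q₂' : Matrix n n 𝕜, q₁'.PosSemidef ∧ q₂'.PosSemidef ∧ q₂' + q₁' = q₁ + q₂ ∧
      h₂ (S + (q₁ + q₂)) - h₂ (S + q₁) + (h₁ (S + q₁) - h₁ S) =
        h₁ (S + (q₁ + q₂)) - h₁ (S + q₂') + (h₂ (S + q₂') - h₂ S)

/- The contribution of `g` telescopes. -/
lemma Exchangeable.sub_right {h₁ h₂ : Matrix n n 𝕜 → ℝ} (h : Exchangeable h₁ h₂)
    (g : Matrix n n 𝕜 → ℝ) : Exchangeable (h₁ - g) (h₂ - g) := by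
  intro S q₁ q₂ hS hq₁ hq₂
  obtain ⟨q₁', q₂', hq₁', hq₂', hsum, hrate⟩ := h hS hq₁ hq₂
  refine ⟨q₁', q₂', hq₁', hq₂', hsum, ?_⟩
  simp only [Pi.sub_apply]
  linarith

/-- `Achievable l S r` says that users with rate functions `l`, encoded in this order, can share the
total covariance `S` so that their rate increments add up to `r`. The head of the list lies on top
of all the covariances of the tail. -/
inductive Achievable : List (Matrix n n 𝕜 → ℝ) → Matrix n n 𝕜 → ℝ → Prop
  | nil : Achievable [] 0 0
  | cons {l : List (Matrix n n 𝕜 → ℝ)} {S q : Matrix n n 𝕜} {r : ℝ} (h : Matrix n n 𝕜 → ℝ) :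
      Achievable l S r → q.PosSemidef → Achievable (h :: l) (S + q) (h (S + q) - h S + r)

lemma Achievable.posSemidef {l : List (Matrix n n 𝕜 → ℝ)} {S : Matrix n n 𝕜} {r : ℝ}
    (hl : Achievable l S r) : S.PosSemidef := by
  induction hl with
  | nil => exact .zero
  | cons _ _ hq ih => exact ih.add hq

lemma Achievable.perm {l l' : List (Matrix n n 𝕜 → ℝ)} (hperm : l.Perm l')
    (hexch : ∀ h₁ ∈ l, ∀ h₂ ∈ l, Exchangeable h₁ h₂) {S : Matrix n n 𝕜} {r : ℝ}
    (hl : Achievable l S r) : Achievable l' S r := by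
  induction hperm generalizing S r with
  | nil => exact hl
  | cons h _ ih =>
    obtain _ | ⟨_, hl, hq⟩ := hl
    exact .cons h (ih (fun h₁ hh₁ h₂ hh₂ => hexch h₁ (.tail _ hh₁) h₂ (.tail _ hh₂)) hl) hq
  | swap h₁ h₂ l =>
    cases hl with | @cons _ _ q₂ _ _ hl hq₂ =>
    cases hl with | @cons _ _ q₁ _ _ hl hq₁ =>
    obtain ⟨q₁', q₂', hq₁', hq₂', hsum, hrate⟩ :=
      hexch h₁ (by simp) h₂ (by simp) hl.posSemidef hq₁ hq₂
    have hl' := (hl.cons h₂ hq₂').cons h₁ hq₁'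
    rwa [add_assoc _ q₂', hsum, ← add_assoc (_ - _), ← hrate, add_assoc (_ - _),
      ← add_assoc _ q₁] at hl'
  | trans hperm _ ih ih' =>
    refine ih' (fun h₁ hh₁ h₂ hh₂ => ?_) (ih hexch hl)
    exact hexch h₁ (hperm.mem_iff.2 hh₁) h₂ (hperm.mem_iff.2 hh₂)

/-- The increment of `h k` when the covariance of position `k` is added to those of the later
positions. -/
def positionRate {K : ℕ} (h : Fin K → Matrix n n 𝕜 → ℝ) (q : Fin K → Matrix n n 𝕜)
    (k : Fin K) : ℝ :=
  h k (∑ j ∈ Ici k, q j) - h k (∑ j ∈ Ioi k, q j)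

lemma sum_positionRate_succ {K : ℕ} (h : Fin (K + 1) → Matrix n n 𝕜 → ℝ)
    (q : Fin (K + 1) → Matrix n n 𝕜) :
    ∑ k, positionRate h q k = h 0 (∑ k : Fin K, q k.succ + q 0) - h 0 (∑ k : Fin K, q k.succ)
      + ∑ k : Fin K, positionRate (fun j => h j.succ) (fun j => q j.succ) k := by
  rw [Fin.sum_univ_succ]
  simp [positionRate, Fin.sum_Ici_succ, Fin.sum_univ_succ, add_comm (q 0)]

lemma achievable_ofFn_iff {K : ℕ} {h : Fin K → Matrix n n 𝕜 → ℝ} {S : Matrix n n 𝕜} {r : ℝ} :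
    Achievable (List.ofFn h) S r ↔ ∃ q : Fin K → Matrix n n 𝕜, (∀ k, (q k).PosSemidef) ∧
      ∑ k, q k = S ∧ ∑ k, positionRate h q k = r := by
  induction K generalizing S r with
  | zero =>
    constructor
    · rintro ⟨⟩
      exact ⟨0, by simp⟩
    · rintro ⟨q, -, rfl, rfl⟩
      simpa using Achievable.nil
  | succ K ih =>
    rw [List.ofFn_succ]
    constructor
    · intro hl
      cases hl with | cons _ hl hq₀ =>
      obtain ⟨q, hq, rfl, rfl⟩ := ih.1 hl
      refine ⟨Fin.cons _ q, Fin.cases hq₀ hq, ?_, ?_⟩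
      · simp [Fin.sum_univ_succ, add_comm]
      · simp [sum_positionRate_succ]
    · rintro ⟨q, hq, rfl, rfl⟩
      have hl := (ih.2 ⟨_, fun k => hq k.succ, rfl, rfl⟩ :
        Achievable (List.ofFn fun k => h k.succ) _ _).cons (h 0) (hq 0)
      rwa [← sum_positionRate_succ, add_comm _ (q 0), ← Fin.sum_univ_succ] at hl

/-- The sum rates within the power budget `P`, without the requirement that each single rate be
nonnegative. -/
def relaxedSumRates [Fintype n] {K : ℕ} (h : Fin K → Matrix n n 𝕜 → ℝ) (P : ℝ) : Set ℝ :=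
  (fun q => ∑ k, positionRate h q k) '' budgetSet (Fin K) n 𝕜 P

lemma mem_relaxedSumRates_iff [Fintype n] {K : ℕ} {h : Fin K → Matrix n n 𝕜 → ℝ} {P r : ℝ} :
    r ∈ relaxedSumRates h P ↔
      ∃ S, RCLike.re S.trace ≤ P ∧ Achievable (List.ofFn h) S r := by
  simp only [achievable_ofFn_iff]
  constructor
  · rintro ⟨q, ⟨hq, hP⟩, hr⟩
    exact ⟨∑ k, q k, by simpa [trace_sum] using hP, q, hq, rfl, hr⟩
  · rintro ⟨_, hP, q, hq, rfl, hr⟩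
    exact ⟨q, ⟨hq, by simpa [trace_sum] using hP⟩, hr⟩

lemma relaxedSumRates_comp_perm [Fintype n] {K : ℕ} {h : Fin K → Matrix n n 𝕜 → ℝ}
    (hexch : ∀ i j, Exchangeable (h i) (h j)) (P : ℝ) (π : Equiv.Perm (Fin K)) :
    relaxedSumRates (h ∘ π) P = relaxedSumRates h P := by
  have hexch' : ∀ g : Fin K → Matrix n n 𝕜 → ℝ, (∀ i j, Exchangeable (g i) (g j)) →
      ∀ h₁ ∈ List.ofFn g, ∀ h₂ ∈ List.ofFn g, Exchangeable h₁ h₂ := by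
    simpa only [List.forall_mem_ofFn_iff] using fun _ => id
  have hperm := π.ofFn_comp_perm h
  ext r
  simp only [mem_relaxedSumRates_iff]
  exact exists_congr fun S => and_congr_right fun _ =>
    ⟨.perm hperm (hexch' _ fun _ _ => hexch _ _), .perm hperm.symm (hexch' _ hexch)⟩

lemma exists_isMaxOn_sum_positionRate [Fintype n] {K : ℕ} {h : Fin K → Matrix n n 𝕜 → ℝ}
    {P : ℝ} (hcont : ∀ k, ContinuousOn (h k) {S | S.PosSemidef}) (hP : 0 ≤ P) :
    ∃ q ∈ budgetSet (Fin K) n 𝕜 P,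
      IsMaxOn (fun q => ∑ k, positionRate h q k) (budgetSet (Fin K) n 𝕜 P) q := by
  refine isCompact_budgetSet.exists_isMaxOn ⟨0, zero_mem_budgetSet hP⟩ ?_
  have hsum (k : Fin K) (T : Finset (Fin K)) :
      ContinuousOn (fun q => h k (∑ j ∈ T, q j)) (budgetSet (Fin K) n 𝕜 P) :=
    (hcont k).comp (by fun_prop) fun q hq => posSemidef_sum T fun j _ => hq.1 j
  exact continuousOn_finsetSum _ fun k _ => (hsum k (Ici k)).sub (hsum k (Ioi k))

end EncodingOrder

section LogDet

section Gradient

variable {m n 𝕜 : Type*} [Fintype n] [DecidableEq m] [RCLike 𝕜]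

lemma posDef_one_add_mul_mul_conjTranspose [Finite m] (H : Matrix m n 𝕜) {S : Matrix n n 𝕜}
    (hS : S.PosSemidef) : (1 + H * S * Hᴴ).PosDef :=
  PosDef.one.add_posSemidef (hS.mul_mul_conjTranspose_same H)

variable [Fintype m]

/-- The gradient of `S ↦ log det (1 + H S Hᴴ)` for the trace pairing. -/
noncomputable def logdetGrad (H : Matrix m n 𝕜) (S : Matrix n n 𝕜) : Matrix n n 𝕜 :=
  Hᴴ * (1 + H * S * Hᴴ)⁻¹ * H

lemma posSemidef_logdetGrad (H : Matrix m n 𝕜) {S : Matrix n n 𝕜} (hS : S.PosSemidef) :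
    (logdetGrad H S).PosSemidef :=
  (posDef_one_add_mul_mul_conjTranspose H hS).inv.posSemidef.conjTranspose_mul_mul_same H

variable [DecidableEq n]

lemma det_one_add_mul_add_mul_conjTranspose (H : Matrix m n 𝕜) {S : Matrix n n 𝕜}
    (hS : S.PosSemidef) (Y : Matrix n n 𝕜) :
    (1 + H * (S + Y) * Hᴴ).det = (1 + H * S * Hᴴ).det * (1 + logdetGrad H S * Y).det := by
  have hu := (isUnit_iff_isUnit_det _).1 (posDef_one_add_mul_mul_conjTranspose H hS).isUnit
  rw [logdetGrad, Matrix.mul_add, Matrix.add_mul, ← add_assoc, det_add_mul _ _ hu]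
  simp only [Matrix.mul_assoc]

/- Resolvent identity, by pushing `Hᴴ` through the factor on the left. -/
lemma one_add_logdetGrad_mul_mul_logdetGrad_add (H : Matrix m n 𝕜) {S q : Matrix n n 𝕜}
    (hS : S.PosSemidef) (hq : q.PosSemidef) :
    (1 + logdetGrad H S * q) * logdetGrad H (S + q) = logdetGrad H S := by
  have hu := (isUnit_iff_isUnit_det _).1 (posDef_one_add_mul_mul_conjTranspose H hS).isUnit
  have hu' := (isUnit_iff_isUnit_det _).1
    (posDef_one_add_mul_mul_conjTranspose H (hS.add hq)).isUnit
  have hpush : (1 + logdetGrad H S * q) * Hᴴ =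
      Hᴴ * (1 + H * S * Hᴴ)⁻¹ * (1 + H * (S + q) * Hᴴ) := by
    calc (1 + logdetGrad H S * q) * Hᴴ
        = Hᴴ * (1 + H * S * Hᴴ)⁻¹ * (1 + H * S * Hᴴ)
          + Hᴴ * (1 + H * S * Hᴴ)⁻¹ * (H * q * Hᴴ) := by
          rw [Matrix.mul_assoc Hᴴ, nonsing_inv_mul _ hu, logdetGrad, Matrix.add_mul]
          simp only [Matrix.mul_assoc, Matrix.one_mul, Matrix.mul_one]
      _ = _ := by rw [← Matrix.mul_add, Matrix.mul_add H, Matrix.add_mul _ _ Hᴴ, add_assoc]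
  calc (1 + logdetGrad H S * q) * logdetGrad H (S + q)
      = ((1 + logdetGrad H S * q) * Hᴴ) * (1 + H * (S + q) * Hᴴ)⁻¹ * H := by
        simp only [logdetGrad, Matrix.mul_assoc]
    _ = logdetGrad H S := by rw [hpush, mul_nonsing_inv_cancel_right _ _ hu', logdetGrad]

end Gradient

lemma log_re_mul {x y : ℂ} (hx : 0 < x) (hy : 0 < y) :
    Real.log (x * y).re = Real.log x.re + Real.log y.re := by
  have hx := Complex.pos_iff.1 hx
  have hy := Complex.pos_iff.1 hy
  rw [Complex.mul_re, ← hx.2, zero_mul, sub_zero, Real.log_mul hx.1.ne' hy.1.ne']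

variable {m nt : ℕ} (H : Matrix (Fin m) (Fin nt) ℂ) {S : Matrix (Fin nt) (Fin nt) ℂ}

lemma logdetI_add (hS : S.PosSemidef) {Y : Matrix (Fin nt) (Fin nt) ℂ} (hY : Y.PosSemidef) :
    logdetI (H * (S + Y) * Hᴴ) =
      logdetI (H * S * Hᴴ) + Real.log (1 + logdetGrad H S * Y).det.re := by
  rw [logdetI, logdetI, det_one_add_mul_add_mul_conjTranspose H hS,
    log_re_mul (posDef_one_add_mul_mul_conjTranspose H hS).det_pos
      (det_one_add_mul_pos (posSemidef_logdetGrad H hS) hY)]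

/- `det (1 + t • M) = 1 + t * trace M + O(t²)`. -/
lemma hasDerivAt_logdetI (hS : S.PosSemidef) (E : Matrix (Fin nt) (Fin nt) ℂ) :
    HasDerivAt (fun t : ℝ => logdetI (H * (S + t • E) * Hᴴ))
      (logdetGrad H S * E).trace.re 0 := by
  set c := (1 + H * S * Hᴴ).det with hc
  set M := logdetGrad H S * E
  have hcpos := Complex.pos_iff.1 (posDef_one_add_mul_mul_conjTranspose H hS).det_pos
  obtain ⟨p, hp⟩ : ∃ p : Polynomial ℂ, ∀ z : ℂ,
      (1 + H * (S + z • E) * Hᴴ).det = c * (1 + M.trace * z + p.eval z * z ^ 2) :=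
    ⟨_, fun z => by
      rw [det_one_add_mul_add_mul_conjTranspose H hS, mul_smul_comm, det_one_add_smul]⟩
  have hdet : HasDerivAt (fun z : ℂ => (1 + H * (S + z • E) * Hᴴ).det) (c * M.trace)
      ((0 : ℝ) : ℂ) := by
    simp only [hp]
    have hquad := (p.hasDerivAt ((0 : ℝ) : ℂ)).mul (hasDerivAt_pow 2 ((0 : ℝ) : ℂ))
    have hlin := ((hasDerivAt_id ((0 : ℝ) : ℂ)).const_mul M.trace).const_add 1
    exact ((hlin.add hquad).const_mul c).congr_deriv (by simp)
  simp only [← Complex.coe_smul]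
  refine (hdet.real_of_complex.log (by simpa using hcpos.1.ne')).congr_deriv ?_
  rw [← hc] at hcpos
  simp only [Complex.ofReal_zero, zero_smul, add_zero, ← hc, Complex.mul_re, ← hcpos.2, zero_mul,
    sub_zero, mul_div_cancel_left₀ _ hcpos.1.ne']

lemma continuousOn_logdetI_mul_mul_conjTranspose :
    ContinuousOn (fun S : Matrix (Fin nt) (Fin nt) ℂ => logdetI (H * S * Hᴴ))
      {S | S.PosSemidef} := by
  refine ContinuousOn.log (Continuous.continuousOn ?_) fun S hS =>
    (Complex.pos_iff.1 (posDef_one_add_mul_mul_conjTranspose H hS).det_pos).1.ne'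
  fun_prop

lemma exchangeable_logdetI {m₁ m₂ : ℕ} (H₁ : Matrix (Fin m₁) (Fin nt) ℂ)
    (H₂ : Matrix (Fin m₂) (Fin nt) ℂ) :
    Exchangeable (fun S : Matrix (Fin nt) (Fin nt) ℂ => logdetI (H₁ * S * H₁ᴴ))
      (fun S : Matrix (Fin nt) (Fin nt) ℂ => logdetI (H₂ * S * H₂ᴴ)) := by
  intro S q₁ q₂ hS hq₁ hq₂
  have hA := posSemidef_logdetGrad H₁ hS
  have hB := posSemidef_logdetGrad H₂ hS
  obtain ⟨q₁', q₂', hq₁', hq₂', hsum, hdet⟩ := exists_add_eq_det_mul_det_mul_det hA hB hq₁ hq₂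
  refine ⟨q₁', q₂', hq₁', hq₂', hsum, ?_⟩
  have hq := hq₁.add hq₂
  have hlog {A B q r s : Matrix (Fin nt) (Fin nt) ℂ} (hA : A.PosSemidef) (hB : B.PosSemidef)
      (hq : q.PosSemidef) (hr : r.PosSemidef) (hs : s.PosSemidef) :
      Real.log ((1 + A * q).det * (1 + B * r).det * (1 + B * s).det).re =
        Real.log (1 + A * q).det.re + Real.log (1 + B * r).det.re
          + Real.log (1 + B * s).det.re := by
    have hpos := det_one_add_mul_pos hA hq
    rw [log_re_mul (mul_pos hpos (det_one_add_mul_pos hB hr)) (det_one_add_mul_pos hB hs),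
      log_re_mul hpos (det_one_add_mul_pos hB hr)]
  have hlogdet := congrArg (fun z : ℂ => Real.log z.re) hdet
  simp only [hlog hA hB hq hq₁ hq₂', hlog hB hA hq hq₁ hq₂'] at hlogdet
  simp only [logdetI_add _ hS hq, logdetI_add _ hS hq₁, logdetI_add _ hS hq₂']
  linarith

end LogDet

section SecrecyGain

variable {nt ne : ℕ}

/-- The secrecy rate that a total covariance `S` would give to a single user with channel `H`
against the eavesdropper channel `G`; the rates at the positions are increments of it. -/
noncomputable def secrecyGain {m : ℕ} (H : Matrix (Fin m) (Fin nt) ℂ)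
    (G : Matrix (Fin ne) (Fin nt) ℂ) (S : Matrix (Fin nt) (Fin nt) ℂ) : ℝ :=
  logdetI (H * S * Hᴴ) - logdetI (G * S * Gᴴ)

lemma secrecyRate_eq_positionRate {K : ℕ} {n : Fin K → ℕ}
    (H : ∀ k : Fin K, Matrix (Fin (n k)) (Fin nt) ℂ) (G : Matrix (Fin ne) (Fin nt) ℂ)
    (π : Equiv.Perm (Fin K)) (Q : Fin K → Matrix (Fin nt) (Fin nt) ℂ) :
    secrecyRate H G π Q = positionRate (fun k => secrecyGain (H (π k)) G) (Q ∘ π) := by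
  ext k
  simp only [secrecyRate, positionRate, secrecyGain, filter_le_eq_Ici, filter_lt_eq_Ioi,
    Function.comp_apply]
  ring

lemma exchangeable_secrecyGain {m₁ m₂ : ℕ} (H₁ : Matrix (Fin m₁) (Fin nt) ℂ)
    (H₂ : Matrix (Fin m₂) (Fin nt) ℂ) (G : Matrix (Fin ne) (Fin nt) ℂ) :
    Exchangeable (secrecyGain H₁ G) (secrecyGain H₂ G) :=
  (exchangeable_logdetI H₁ H₂).sub_right fun S => logdetI (G * S * Gᴴ)

end SecrecyGain

section FirstOrderConditions

lemma deriv_nonpos_of_isMaxOn_convex {E : Type*} [AddCommGroup E] [Module ℝ E] {f : E → ℝ}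
    {s : Set E} (hs : Convex ℝ s) {x y : E} (hx : x ∈ s) (hy : y ∈ s) (hmax : IsMaxOn f s x)
    {f' : ℝ} (hf : HasDerivAt (fun t : ℝ => f (x + t • (y - x))) f' 0) : f' ≤ 0 := by
  have hmax' : IsMaxOn (fun t : ℝ => f (x + t • (y - x))) (Set.Icc 0 1) 0 :=
    hmax.comp_mapsTo (fun t ht => hs.add_smul_sub_mem hx hy ht) (by simp)
  have hone : (1 : ℝ) ∈ posTangentConeAt (Set.Icc (0 : ℝ) 1) 0 :=
    mem_posTangentConeAt_of_segment_subset (by simp [segment_eq_Icc])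
  simpa using hmax'.localize.hasFDerivWithinAt_nonpos hf.hasFDerivAt.hasFDerivWithinAt hone

variable {ι n 𝕜 : Type*} [Fintype ι] [Fintype n] [RCLike 𝕜] {P : ℝ} {D q : ι → Matrix n n 𝕜}

lemma mul_re_trace_mul_le_of_isMaxOn_budgetSet (hP : 0 ≤ P)
    (hmax : IsMaxOn (fun Z => ∑ j, RCLike.re (D j * Z j).trace) (budgetSet ι n 𝕜 P) q)
    {W : Matrix n n 𝕜} (hW : W.PosSemidef) (j : ι) :
    P * RCLike.re (D j * W).trace ≤ RCLike.re W.trace * ∑ i, RCLike.re (D i * q i).trace := by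
  classical
  obtain hW0 | hWpos := (re_trace_nonneg hW).eq_or_lt
  · simp [eq_zero_of_re_trace_nonpos hW hW0.ge]
  let Z : ι → Matrix n n 𝕜 := Pi.single j ((P / RCLike.re W.trace) • W)
  have hZ0 {i : ι} (hij : i ≠ j) : Z i = 0 := Pi.single_eq_of_ne hij _
  have hZj : Z j = (P / RCLike.re W.trace) • W := Pi.single_eq_same ..
  have hZ : Z ∈ budgetSet ι n 𝕜 P := by
    refine ⟨fun i => ?_, ?_⟩
    · obtain rfl | hij := eq_or_ne i j
      · exact hZj ▸ hW.smul (div_nonneg hP hWpos.le)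
      · exact hZ0 hij ▸ .zero
    · rw [sum_eq_single j (fun i _ hij => by simp [hZ0 hij]) (by simp), hZj, trace_smul,
        RCLike.smul_re, div_mul_cancel₀ _ hWpos.ne']
  have hle : ∑ i, RCLike.re (D i * Z i).trace ≤ ∑ i, RCLike.re (D i * q i).trace := hmax hZ
  rwa [sum_eq_single j (fun i _ hij => by simp [hZ0 hij]) (by simp), hZj, Matrix.mul_smul,
    trace_smul, RCLike.smul_re, div_mul_eq_mul_div, div_le_iff₀ hWpos,
    mul_comm _ (RCLike.re W.trace)] at hle

/- Karush-Kuhn-Tucker conditions: the multiplier `c` of the power constraint is the optimal value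
divided by `P`, and complementary slackness is the equality case of `0 ≤ tr ((c - D j) * q j)`. -/
lemma exists_multiplier_of_isMaxOn_budgetSet [DecidableEq n] (hP : 0 < P)
    (hD : ∀ j, (D j).IsHermitian) (hq : q ∈ budgetSet ι n 𝕜 P)
    (hmax : IsMaxOn (fun Z => ∑ j, RCLike.re (D j * Z j).trace) (budgetSet ι n 𝕜 P) q) :
    ∃ c : ℝ, 0 ≤ c ∧ ∀ j, (c • 1 - D j).PosSemidef ∧ (c • 1 - D j) * q j = 0 := by
  set v := ∑ j, RCLike.re (D j * q j).trace
  have hc : 0 ≤ v / P := div_nonneg (by simpa using hmax (zero_mem_budgetSet hP.le)) hP.le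
  have htrace (j : ι) (W : Matrix n n 𝕜) : RCLike.re (((v / P) • 1 - D j) * W).trace =
      v / P * RCLike.re W.trace - RCLike.re (D j * W).trace := by
    rw [Matrix.sub_mul, smul_mul_assoc, Matrix.one_mul, trace_sub, trace_smul, map_sub,
      RCLike.smul_re]
  have hslack (j : ι) : ((v / P) • 1 - D j).PosSemidef := by
    refine posSemidef_of_forall_re_trace_mul_nonneg ((PosSemidef.one.smul hc).1.sub (hD j))
      fun W hW => ?_
    rw [htrace, sub_nonneg, div_mul_eq_mul_div, le_div_iff₀ hP, mul_comm, mul_comm v]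
    exact mul_re_trace_mul_le_of_isMaxOn_budgetSet hP.le hmax hW j
  have hnonneg (j : ι) : 0 ≤ (((v / P) • 1 - D j) * q j).trace :=
    trace_mul_nonneg (hslack j) (hq.1 j)
  have hsum : ∑ j, (((v / P) • 1 - D j) * q j).trace = 0 := by
    refine le_antisymm (RCLike.le_iff_re_im.2 ⟨?_, ?_⟩) (sum_nonneg fun j _ => hnonneg j)
    · have := mul_le_mul_of_nonneg_left hq.2 hc
      rw [div_mul_cancel₀ _ hP.ne'] at this
      simpa [htrace, ← mul_sum] using this
    · simpa using (RCLike.nonneg_iff.1 (sum_nonneg fun j _ => hnonneg j)).2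
  refine ⟨v / P, hc, fun j => ⟨hslack j, mul_eq_zero_of_trace_mul_eq_zero (hslack j) (hq.1 j) ?_⟩⟩
  exact (sum_eq_zero_iff_of_nonneg fun j _ => hnonneg j).1 hsum j (mem_univ j)

end FirstOrderConditions

section SumRateGradient

variable {n 𝕜 : Type*} [RCLike 𝕜] {K : ℕ}

/-- When the rate functions have gradient fields `d`, the difference of the gradients that enter
the two terms of the rate at position `k`. -/
def gradIncrement (d : Fin K → Matrix n n 𝕜 → Matrix n n 𝕜) (q : Fin K → Matrix n n 𝕜)
    (k : Fin K) : Matrix n n 𝕜 :=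
  d k (∑ j ∈ Ici k, q j) - d k (∑ j ∈ Ioi k, q j)

/-- The gradient of the sum rate with respect to the covariance at position `j`, when the rate
functions have gradient fields `d`. The positions `k < j` see this covariance in both terms of
their rate, and position `j` sees it in the first term only. -/
def sumRateGrad (d : Fin K → Matrix n n 𝕜 → Matrix n n 𝕜) (q : Fin K → Matrix n n 𝕜)
    (j : Fin K) : Matrix n n 𝕜 :=
  d j (∑ i ∈ Ici j, q i) + ∑ k ∈ Iio j, gradIncrement d q k

lemma isHermitian_sumRateGrad {d : Fin K → Matrix n n 𝕜 → Matrix n n 𝕜}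
    (hd : ∀ k S, S.PosSemidef → (d k S).IsHermitian) {q : Fin K → Matrix n n 𝕜}
    (hq : ∀ k, (q k).PosSemidef) (j : Fin K) : (sumRateGrad d q j).IsHermitian := by
  have hsum (k : Fin K) (T : Finset (Fin K)) : (d k (∑ j ∈ T, q j)).IsHermitian :=
    hd k _ (posSemidef_sum T fun j _ => hq j)
  exact (hsum j _).add (isSelfAdjoint_sum _ fun k _ => (hsum k _).sub (hsum k _))

variable [Fintype n]

lemma hasDerivAt_sum_positionRate {h : Fin K → Matrix n n 𝕜 → ℝ}
    {d : Fin K → Matrix n n 𝕜 → Matrix n n 𝕜}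
    (hd : ∀ k S, S.PosSemidef → ∀ E,
      HasDerivAt (fun t : ℝ => h k (S + t • E)) (RCLike.re (d k S * E).trace) 0)
    {q : Fin K → Matrix n n 𝕜} (hq : ∀ k, (q k).PosSemidef) (E : Fin K → Matrix n n 𝕜) :
    HasDerivAt (fun t : ℝ => ∑ k, positionRate h (q + t • E) k)
      (∑ j, RCLike.re (sumRateGrad d q j * E j).trace) 0 := by
  have hsum (k : Fin K) (T : Finset (Fin K)) :
      HasDerivAt (fun t : ℝ => h k (∑ j ∈ T, (q + t • E) j))
        (RCLike.re (d k (∑ j ∈ T, q j) * ∑ j ∈ T, E j).trace) 0 := by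
    simp only [Pi.add_apply, Pi.smul_apply, sum_add_distrib, ← smul_sum]
    exact hd k _ (posSemidef_sum T fun j _ => hq j) _
  refine (HasDerivAt.fun_sum fun k _ => (hsum k (Ici k)).sub (hsum k (Ioi k))).congr_deriv ?_
  have hposition (k : Fin K) : RCLike.re (d k (∑ j ∈ Ici k, q j) * ∑ j ∈ Ici k, E j).trace
      - RCLike.re (d k (∑ j ∈ Ioi k, q j) * ∑ j ∈ Ioi k, E j).trace =
      RCLike.re (d k (∑ j ∈ Ici k, q j) * E k).trace
        + ∑ j ∈ Ioi k, RCLike.re (gradIncrement d q k * E j).trace := by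
    rw [← add_sum_Ioi_eq_sum_Ici (f := E), ← map_sum, ← trace_sum, ← Matrix.mul_sum,
      gradIncrement, Matrix.sub_mul, Matrix.mul_add, trace_add, trace_sub, map_add, map_sub]
    ring
  have hswap : ∑ k, ∑ j ∈ Ioi k, RCLike.re (gradIncrement d q k * E j).trace =
      ∑ j, ∑ k ∈ Iio j, RCLike.re (gradIncrement d q k * E j).trace :=
    sum_comm' (by simp)
  simp only [hposition, sum_add_distrib, hswap, sumRateGrad, Matrix.add_mul, Matrix.sum_mul,
    trace_add, trace_sum, map_add, map_sum]

lemma isMaxOn_sum_re_trace_sumRateGrad_mul {h : Fin K → Matrix n n 𝕜 → ℝ}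
    {d : Fin K → Matrix n n 𝕜 → Matrix n n 𝕜}
    (hd : ∀ k S, S.PosSemidef → ∀ E,
      HasDerivAt (fun t : ℝ => h k (S + t • E)) (RCLike.re (d k S * E).trace) 0)
    {q : Fin K → Matrix n n 𝕜} {P : ℝ} (hq : q ∈ budgetSet (Fin K) n 𝕜 P)
    (hmax : IsMaxOn (fun q => ∑ k, positionRate h q k) (budgetSet (Fin K) n 𝕜 P) q) :
    IsMaxOn (fun Z => ∑ j, RCLike.re (sumRateGrad d q j * Z j).trace)
      (budgetSet (Fin K) n 𝕜 P) q := by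
  intro Z hZ
  have hderiv := hasDerivAt_sum_positionRate hd hq.1 (Z - q)
  have hnonpos := deriv_nonpos_of_isMaxOn_convex (f := fun q => ∑ k, positionRate h q k)
    convex_budgetSet hq hZ hmax hderiv
  simpa [Matrix.mul_sub] using hnonpos

end SumRateGradient

section OptimalRates

variable {m nt ne : ℕ} (H : Matrix (Fin m) (Fin nt) ℂ) (G : Matrix (Fin ne) (Fin nt) ℂ)

lemma continuousOn_secrecyGain : ContinuousOn (secrecyGain H G) {S | S.PosSemidef} :=
  (continuousOn_logdetI_mul_mul_conjTranspose H).sub (continuousOn_logdetI_mul_mul_conjTranspose G)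

/-- The gradient of `secrecyGain H G` for the trace pairing. -/
noncomputable def secrecyGrad (S : Matrix (Fin nt) (Fin nt) ℂ) : Matrix (Fin nt) (Fin nt) ℂ :=
  logdetGrad H S - logdetGrad G S

variable {S q Φ : Matrix (Fin nt) (Fin nt) ℂ}

lemma isHermitian_secrecyGrad (hS : S.PosSemidef) : (secrecyGrad H G S).IsHermitian :=
  (posSemidef_logdetGrad H hS).1.sub (posSemidef_logdetGrad G hS).1

lemma hasDerivAt_secrecyGain (hS : S.PosSemidef) (E : Matrix (Fin nt) (Fin nt) ℂ) :
    HasDerivAt (fun t : ℝ => secrecyGain H G (S + t • E))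
      (RCLike.re (secrecyGrad H G S * E).trace) 0 :=
  ((hasDerivAt_logdetI H hS E).sub (hasDerivAt_logdetI G hS E)).congr_deriv (by
    rw [secrecyGrad, Matrix.sub_mul, trace_sub, RCLike.re_eq_complex_re, Complex.sub_re])

/- Since `Φ * q = 0`, both `logdetGrad H + Φ` and `logdetGrad G` change by the resolvent
identity when `q` is added to the covariance. -/
lemma posSemidef_add_secrecyGrad_of_add (hS : S.PosSemidef) (hq : q.PosSemidef)
    (hΦ : Φ.PosSemidef) (hΦq : Φ * q = 0) (h : (Φ + secrecyGrad H G (S + q)).PosSemidef) :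
    (Φ + secrecyGrad H G S).PosSemidef := by
  have hqΦ : q * Φ = 0 := by simpa [hΦ.1.eq, hq.1.eq] using congrArg conjTranspose hΦq
  rw [secrecyGrad, ← add_sub_assoc] at h ⊢
  refine posSemidef_sub_of_resolvent_sub (hΦ.add (posSemidef_logdetGrad H hS))
    (posSemidef_logdetGrad G hS).1 (posSemidef_logdetGrad G (hS.add hq)).1 hq ?_
    (one_add_logdetGrad_mul_mul_logdetGrad_add G hS hq) h
  rw [add_mul Φ, hΦq, zero_add, mul_add, one_add_logdetGrad_mul_mul_logdetGrad_add H hS hq,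
    add_mul, one_mul, mul_assoc, hqΦ, mul_zero, add_zero]

lemma secrecyGain_le_secrecyGain_add (hS : S.PosSemidef) (hq : q.PosSemidef) (hΦq : Φ * q = 0)
    (h : (Φ + secrecyGrad H G S).PosSemidef) : secrecyGain H G S ≤ secrecyGain H G (S + q) := by
  have hG := posSemidef_logdetGrad G hS
  have hdet : (1 + logdetGrad G S * q).det ≤ (1 + logdetGrad H S * q).det := by
    rw [secrecyGrad, ← add_sub_assoc] at h
    simpa [add_mul, hΦq] using det_one_add_mul_le_of_posSemidef_sub hG h hq
  have hlog := Real.log_le_log (Complex.pos_iff.1 (det_one_add_mul_pos hG hq)).1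
    (Complex.le_def.1 hdet).1
  rw [secrecyGain, secrecyGain, logdetI_add H hS hq, logdetI_add G hS hq]
  linarith

end OptimalRates

section Maximizer

lemma sum_Iic_induction {ι M : Type*} [LinearOrder ι] [LocallyFiniteOrderBot ι]
    [WellFoundedLT ι] [WellFoundedGT ι] [AddCommMonoid M] {p : M → Prop} {δ : ι → M}
    (zero : p 0) (step : ∀ k, p (∑ i ∈ Iio k, δ i) → p (∑ i ∈ Iic k, δ i)) (k : ι) :
    p (∑ i ∈ Iic k, δ i) := by
  induction k using WellFoundedLT.induction with
  | ind k ih =>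
    refine step k ?_
    by_cases hk : IsMin k
    · simpa [hk.finsetIio_eq] using zero
    · obtain ⟨i, hi⟩ : ∃ i, i ⋖ k := exists_covBy_of_wellFoundedGT hk
      have hIio : Iio k = Iic i := by ext; simp [hi.lt_iff_le_left]
      exact hIio ▸ ih i hi.lt

variable {K nt ne : ℕ} {n : Fin K → ℕ} (H : ∀ k : Fin K, Matrix (Fin (n k)) (Fin nt) ℂ)
  (G : Matrix (Fin ne) (Fin nt) ℂ) {P : ℝ}

/- With `Φ k = c - sumRateGrad k`, the matrix `c - ∑ i < k, gradIncrement i` is `Φ k` plus the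
gradient at the covariance including position `k`. Removing position `k` from that covariance
subtracts `gradIncrement k`, so positive semidefiniteness propagates along the positions. -/
lemma positionRate_nonneg_of_multiplier {q : Fin K → Matrix (Fin nt) (Fin nt) ℂ}
    (hq : ∀ k, (q k).PosSemidef) {c : ℝ} (hc : 0 ≤ c)
    (hslack : ∀ k, (c • 1 - sumRateGrad (fun k => secrecyGrad (H k) G) q k).PosSemidef ∧
      (c • 1 - sumRateGrad (fun k => secrecyGrad (H k) G) q k) * q k = 0) (k : Fin K) :
    0 ≤ positionRate (fun k => secrecyGain (H k) G) q k := by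
  set d := fun k => secrecyGrad (H k) G with hd
  have hS (k : Fin K) : (∑ j ∈ Ioi k, q j).PosSemidef := posSemidef_sum _ fun j _ => hq j
  have hIci (k : Fin K) : ∑ j ∈ Ioi k, q j + q k = ∑ j ∈ Ici k, q j := by
    rw [add_comm, add_sum_Ioi_eq_sum_Ici]
  have hwith (k : Fin K) : c • 1 - ∑ i ∈ Iio k, gradIncrement d q i =
      (c • 1 - sumRateGrad d q k) + secrecyGrad (H k) G (∑ j ∈ Ioi k, q j + q k) := by
    rw [sumRateGrad, hIci]; abel
  have hwithout (k : Fin K) : c • 1 - ∑ i ∈ Iic k, gradIncrement d q i =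
      (c • 1 - sumRateGrad d q k) + secrecyGrad (H k) G (∑ j ∈ Ioi k, q j) := by
    rw [← sum_Iio_add_eq_sum_Iic, sumRateGrad, gradIncrement]; simp only [hd]; abel
  have hstep (k : Fin K) (hk : (c • 1 - ∑ i ∈ Iio k, gradIncrement d q i).PosSemidef) :
      (c • 1 - ∑ i ∈ Iic k, gradIncrement d q i).PosSemidef := by
    rw [hwith] at hk
    rw [hwithout]
    exact posSemidef_add_secrecyGrad_of_add _ _ (hS k) (hq k) (hslack k).1 (hslack k).2 hk
  have hIic : (c • 1 - ∑ i ∈ Iic k, gradIncrement d q i).PosSemidef :=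
    sum_Iic_induction (p := fun M => PosSemidef (c • 1 - M))
      (by simpa using PosSemidef.one.smul hc) hstep k
  rw [hwithout] at hIic
  rw [positionRate, ← hIci, sub_nonneg]
  exact secrecyGain_le_secrecyGain_add _ _ (hS k) (hq k) (hslack k).2 hIic

lemma positionRate_nonneg_of_isMaxOn (hP : 0 ≤ P) {q : Fin K → Matrix (Fin nt) (Fin nt) ℂ}
    (hq : q ∈ budgetSet (Fin K) (Fin nt) ℂ P)
    (hmax : IsMaxOn (fun q => ∑ k, positionRate (fun k => secrecyGain (H k) G) q k)
      (budgetSet (Fin K) (Fin nt) ℂ P) q) (k : Fin K) :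
    0 ≤ positionRate (fun k => secrecyGain (H k) G) q k := by
  obtain rfl | hP := hP.eq_or_lt
  · have hq0 : ∀ k, q k = 0 := fun k =>
      eq_zero_of_re_trace_nonpos (hq.1 k) ((single_le_sum
        (fun j _ => re_trace_nonneg (hq.1 j)) (mem_univ k)).trans hq.2)
    simp [positionRate, hq0]
  set d := fun k => secrecyGrad (H k) G
  have hD : ∀ k, (sumRateGrad d q k).IsHermitian :=
    isHermitian_sumRateGrad (fun k _ hS => isHermitian_secrecyGrad (H k) G hS) hq.1
  have hlinear := isMaxOn_sum_re_trace_sumRateGrad_mul (h := fun k => secrecyGain (H k) G) (d := d)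
    (fun k _ hS E => hasDerivAt_secrecyGain (H k) G hS E) hq hmax
  obtain ⟨c, hc, hslack⟩ := exists_multiplier_of_isMaxOn_budgetSet hP hD hq hlinear
  exact positionRate_nonneg_of_multiplier H G hq.1 hc hslack k

lemma phi_eq_mul_sSup_relaxedSumRates (hP : 0 ≤ P) {w : ℝ} (hw : 0 ≤ w)
    (π : Equiv.Perm (Fin K)) :
    phi H G P (fun _ => w) π =
      w * sSup (relaxedSumRates (fun k => secrecyGain (H (π k)) G) P) := by
  set h := fun k => secrecyGain (H (π k)) G with hh
  obtain ⟨q, hq, hmax⟩ := exists_isMaxOn_sum_positionRate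
    (fun k => continuousOn_secrecyGain (H (π k)) G) hP
  have hgreatest : IsGreatest (relaxedSumRates h P) (∑ k, positionRate h q k) :=
    ⟨⟨q, hq, rfl⟩, by rintro _ ⟨Z, hZ, rfl⟩; exact hmax hZ⟩
  rw [hgreatest.csSup_eq]
  simp only [phi, secrecyRate_eq_positionRate, ← mul_sum]
  refine IsGreatest.csSup_eq ⟨⟨q ∘ π.symm, fun k => hq.1 _, ?_, ?_, ?_⟩, ?_⟩
  · simpa [Equiv.sum_comp π.symm fun k => (q k).trace.re] using hq.2
  · simpa [Function.comp_assoc] using positionRate_nonneg_of_isMaxOn (fun k => H (π k)) G hP hq hmax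
  · simp [Function.comp_assoc, hh]
  · rintro _ ⟨Q, hQ, hQP, -, rfl⟩
    refine mul_le_mul_of_nonneg_left (hmax ⟨fun k => hQ (π k), ?_⟩) hw
    simpa [Equiv.sum_comp π fun k => (Q k).trace.re] using hQP

end Maximizer

/-- With equal weights, all encoding orders yield the same optimal secrecy sum rate. -/
theorem equal_weights_order_irrelevant (K nt ne : ℕ) (hK : 1 ≤ K) (n : Fin K → ℕ)
    (H : ∀ k : Fin K, Matrix (Fin (n k)) (Fin nt) ℂ)
    (G : Matrix (Fin ne) (Fin nt) ℂ) (P : ℝ) (hP : 0 ≤ P)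
    (w : ℝ) (hw : 0 ≤ w)
    (σ τ : Equiv.Perm (Fin K)) :
    phi H G P (fun _ => w) σ = phi H G P (fun _ => w) τ := by
  have horder (π : Equiv.Perm (Fin K)) : relaxedSumRates (fun k => secrecyGain (H (π k)) G) P =
      relaxedSumRates (fun k => secrecyGain (H k) G) P :=
    relaxedSumRates_comp_perm (fun i j => exchangeable_secrecyGain (H i) (H j) G) P π
  rw [phi_eq_mul_sSup_relaxedSumRates H G hP hw, phi_eq_mul_sSup_relaxedSumRates H G hP hw,
    horder, horder]
end

section
/- Fix K ≥ 1, channel matrices H_k ∈ ℂ^{n_k×n_t} (k = 1,…,K) and G ∈ ℂ^{n_e×n_t}. Let Q_1,…,Q_K be Hermitian positive semidefinite n_t×n_t complex matrices and Σ_1,…,Σ_K Hermitian positive semidefinite matrices (Σ_k of size n_k×n_k) such that (i) R^MAC_j(Σ_1,…,Σ_K) = R^BC_j(Q_1,…,Q_K) for every j = 1,…,K, and (ii) the secrecy rate R_j (under the identity order) is ≥ 0 for every j = 1,…,K. Then for every k = 1,…,K: log det(I + Σ_{j=k}^K H_jᴴΣ_jH_j) ≥ log det(I + G(Σ_{j=k}^K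 Q_j)Gᴴ). -/
/-!
Duality and nonnegativity of the secrecy rates say that each MAC rate is at least the increment of
the eavesdropper's log-determinant caused by the same user. Over the users `j ≥ k`, the
eavesdropper's increments telescope to its tail log-determinant, and the MAC rates telescope to
`log det (1 + (A + B)) - log det (1 + A)`, where `A` collects the users `j < k` and `B` the users
`j ≥ k`. This is at most `log det (1 + B)`, because `P ↦ log det (1 + P)` is subadditive on
positive semidefinite matrices: for `A = Dᴴ * D` and `B = Cᴴ * C`, the determinant of `1 + (A + B)`
is that of the block matrix with diagonal blocks `1 + D * Dᴴ` and `1 + C * Cᴴ` and off-diagonal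
blocks `D * Cᴴ` and `C * Dᴴ`, to which Fischer's inequality applies.
-/

open Matrix Finset ComplexOrder

/-- BC rate of user `k` (encoding order `1, …, K`). -/
noncomputable def RBC {K nt : ℕ} {n : Fin K → ℕ}
    (H : ∀ k : Fin K, Matrix (Fin (n k)) (Fin nt) ℂ)
    (Q : Fin K → Matrix (Fin nt) (Fin nt) ℂ) (k : Fin K) : ℝ :=
  logdetI (H k * (∑ j ∈ Finset.univ.filter (fun j => k ≤ j), Q j) * (H k)ᴴ)
    - logdetI (H k * (∑ j ∈ Finset.univ.filter (fun j => k < j), Q j) * (H k)ᴴ)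

/-- MAC rate of user `k` (decoding order `1, …, K`). -/
noncomputable def RMAC {K nt : ℕ} {n : Fin K → ℕ}
    (H : ∀ k : Fin K, Matrix (Fin (n k)) (Fin nt) ℂ)
    (Sg : ∀ k : Fin K, Matrix (Fin (n k)) (Fin (n k)) ℂ) (k : Fin K) : ℝ :=
  logdetI (∑ j ∈ Finset.univ.filter (fun j => j ≤ k), (H j)ᴴ * Sg j * H j)
    - logdetI (∑ j ∈ Finset.univ.filter (fun j => j < k), (H j)ᴴ * Sg j * H j)

/-- Secrecy rate of user `k` under the identity encoding order. -/
noncomputable def Rsec {K nt ne : ℕ} {n : Fin K → ℕ}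
    (H : ∀ k : Fin K, Matrix (Fin (n k)) (Fin nt) ℂ)
    (G : Matrix (Fin ne) (Fin nt) ℂ)
    (Q : Fin K → Matrix (Fin nt) (Fin nt) ℂ) (k : Fin K) : ℝ :=
  RBC H Q k
    - logdetI (G * (∑ j ∈ Finset.univ.filter (fun j => k ≤ j), Q j) * Gᴴ)
    + logdetI (G * (∑ j ∈ Finset.univ.filter (fun j => k < j), Q j) * Gᴴ)

section Telescoping

variable {ι M : Type*} [LinearOrder ι] [AddCommGroup M]

theorem sum_sub_filter_le_filter_lt (φ : Finset ι → M) (s : Finset ι) :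
    ∑ i ∈ s, (φ {j ∈ s | i ≤ j} - φ {j ∈ s | i < j}) = φ s - φ ∅ := by
  induction s using Finset.induction_on_min with
  | empty => simp
  | insert a s ha ih =>
    have ha_notMem : a ∉ s := fun h => lt_irrefl a (ha a h)
    have hle : {j ∈ insert a s | a ≤ j} = insert a s :=
      filter_true_of_mem fun j hj => (mem_insert.1 hj).elim ge_of_eq fun h => (ha j h).le
    have hlt : {j ∈ insert a s | a < j} = s := by
      rw [filter_insert, if_neg (lt_irrefl a), filter_true_of_mem ha]
    have htail : ∀ i ∈ s, φ {j ∈ insert a s | i ≤ j} - φ {j ∈ insert a s | i < j} =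
        φ {j ∈ s | i ≤ j} - φ {j ∈ s | i < j} := fun i hi => by
      rw [filter_insert, filter_insert, if_neg (ha i hi).not_ge, if_neg (ha i hi).not_gt]
    rw [sum_insert ha_notMem, hle, hlt, sum_congr rfl htail, ih, sub_add_sub_cancel]

variable [Fintype ι]

theorem sum_ge_sub_filter_le_filter_lt (φ : Finset ι → M) (k : ι) :
    ∑ i with k ≤ i, (φ {j | i ≤ j} - φ {j | i < j}) = φ {j | k ≤ j} - φ ∅ := by
  rw [← sum_sub_filter_le_filter_lt φ {j | k ≤ j}]
  refine sum_congr rfl fun i hi => ?_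
  have hki : k ≤ i := (mem_filter.1 hi).2
  have hle : ∀ j, k ≤ j ∧ i ≤ j ↔ i ≤ j := fun j => and_iff_right_of_imp hki.trans
  have hlt : ∀ j, k ≤ j ∧ i < j ↔ i < j := fun j => and_iff_right_of_imp fun h => hki.trans h.le
  simp only [filter_filter, hle, hlt]

theorem sum_ge_sub_filter_ge_filter_gt (φ : Finset ι → M) (k : ι) :
    ∑ i with k ≤ i, (φ {j | j ≤ i} - φ {j | j < i}) = φ univ - φ {j | j < k} := by
  have h := sum_ge_sub_filter_le_filter_lt (fun s => -φ sᶜ) k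
  simpa only [compl_filter, not_le, not_lt, compl_empty, neg_sub_neg] using h

end Telescoping

section Determinant

variable {m n 𝕜 : Type*} [Fintype m] [Fintype n] [RCLike 𝕜]

open scoped MatrixOrder in
theorem exists_eq_conjTranspose_mul_self {P : Matrix n n 𝕜} (hP : P.PosSemidef) :
    ∃ C : Matrix n n 𝕜, P = Cᴴ * C := by
  classical exact CStarAlgebra.nonneg_iff_eq_star_mul_self.mp hP.nonneg

variable [DecidableEq m] [DecidableEq n]

theorem det_one_add_eq_prod_one_add_eigenvalues {P : Matrix n n 𝕜} (hP : P.IsHermitian) :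
    (1 + P).det = ∏ i, (1 + (hP.eigenvalues i : 𝕜)) := by
  conv_lhs => rw [hP.spectral_theorem, Unitary.conjStarAlgAut_apply]
  rw [det_one_add_mul_comm, ← mul_assoc, Unitary.coe_star_mul_self, one_mul, ← diagonal_one,
    diagonal_add, det_diagonal]
  rfl

theorem one_le_det_one_add_s4 {P : Matrix n n 𝕜} (hP : P.PosSemidef) : 1 ≤ (1 + P).det := by
  rw [det_one_add_eq_prod_one_add_eigenvalues hP.isHermitian]
  have h : (1 : ℝ) ≤ ∏ i, (1 + hP.isHermitian.eigenvalues i) :=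
    one_le_prod fun i _ => le_add_of_nonneg_right (hP.eigenvalues_nonneg i)
  exact_mod_cast h

theorem det_le_det_add {P D : Matrix n n 𝕜} (hP : P.PosSemidef) (hD : D.PosSemidef) :
    P.det ≤ (P + D).det := by
  by_cases hdet : P.det = 0
  · exact hdet ▸ (hP.add hD).det_nonneg
  have hPos : P.PosDef := hP.posDef_iff_det_ne_zero.2 hdet
  obtain ⟨C, rfl⟩ := exists_eq_conjTranspose_mul_self hD
  rw [det_add_mul Cᴴ C (isUnit_iff_ne_zero.2 hdet)]
  exact le_mul_of_one_le_right hPos.det_pos.le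
    (one_le_det_one_add_s4 (hPos.inv.posSemidef.mul_mul_conjTranspose_same C))

/-- Fischer's inequality. -/
theorem det_fromBlocks_le_det_mul_det {P : Matrix m m 𝕜} {X : Matrix m n 𝕜} {S : Matrix n n 𝕜}
    (hP : P.PosDef) (h : (fromBlocks P X Xᴴ S).PosSemidef) :
    (fromBlocks P X Xᴴ S).det ≤ P.det * S.det := by
  have : Invertible P := hP.isUnit.invertible
  have hSchur : (S - Xᴴ * P⁻¹ * X).PosSemidef := (hP.fromBlocks₁₁ X S).1 h
  rw [det_fromBlocks₁₁, invOf_eq_nonsing_inv]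
  refine mul_le_mul_of_nonneg_left ?_ hP.det_pos.le
  simpa only [sub_add_cancel] using
    det_le_det_add hSchur (hP.inv.posSemidef.conjTranspose_mul_mul_same X)

theorem det_one_add_add_le {A B : Matrix n n 𝕜} (hA : A.PosSemidef) (hB : B.PosSemidef) :
    (1 + (A + B)).det ≤ (1 + A).det * (1 + B).det := by
  obtain ⟨D, rfl⟩ := exists_eq_conjTranspose_mul_self hA
  obtain ⟨C, rfl⟩ := exists_eq_conjTranspose_mul_self hB
  have hsum : Dᴴ * D + Cᴴ * C = (fromRows D C)ᴴ * fromRows D C := by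
    rw [conjTranspose_fromRows_eq_fromCols_conjTranspose, fromCols_mul_fromRows]
  have hblocks : 1 + fromRows D C * (fromRows D C)ᴴ =
      fromBlocks (1 + D * Dᴴ) (D * Cᴴ) (D * Cᴴ)ᴴ (1 + C * Cᴴ) := by
    rw [conjTranspose_fromRows_eq_fromCols_conjTranspose, fromRows_mul_fromCols, ← fromBlocks_one,
      fromBlocks_add, zero_add, zero_add, conjTranspose_mul, conjTranspose_conjTranspose]
  rw [hsum, det_one_add_mul_comm, hblocks, det_one_add_mul_comm Dᴴ, det_one_add_mul_comm Cᴴ]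
  refine det_fromBlocks_le_det_mul_det
    (PosDef.one.add_posSemidef (posSemidef_self_mul_conjTranspose D)) ?_
  rw [← hblocks]
  exact PosSemidef.one.add (posSemidef_self_mul_conjTranspose _)

end Determinant

section LogDet

variable {m : ℕ}

theorem logdetI_zero : logdetI (0 : Matrix (Fin m) (Fin m) ℂ) = 0 := by
  rw [logdetI, add_zero, det_one, Complex.one_re, Real.log_one]

theorem logdetI_add_le {A B : Matrix (Fin m) (Fin m) ℂ} (hA : A.PosSemidef) (hB : B.PosSemidef) :
    logdetI (A + B) ≤ logdetI A + logdetI B := by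
  have hpos : ∀ {P : Matrix (Fin m) (Fin m) ℂ}, P.PosSemidef → 0 < (1 + P).det := fun hP =>
    zero_lt_one.trans_le (one_le_det_one_add_s4 hP)
  have hre : ∀ {P : Matrix (Fin m) (Fin m) ℂ}, P.PosSemidef → 0 < (1 + P).det.re := fun hP =>
    (Complex.pos_iff.1 (hpos hP)).1
  have him : (1 + A).det.im = 0 := (Complex.pos_iff.1 (hpos hA)).2.symm
  have hle : (1 + (A + B)).det.re ≤ (1 + A).det.re * (1 + B).det.re := by
    have h := (Complex.le_def.1 (det_one_add_add_le hA hB)).1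
    rwa [Complex.mul_re, him, zero_mul, sub_zero] at h
  rw [logdetI, logdetI, logdetI, ← Real.log_mul (hre hA).ne' (hre hB).ne']
  exact Real.log_le_log (hre (hA.add hB)) hle

end LogDet

section Rates

variable {K nt ne : ℕ} {n : Fin K → ℕ} (H : ∀ k : Fin K, Matrix (Fin (n k)) (Fin nt) ℂ)
  (G : Matrix (Fin ne) (Fin nt) ℂ) (Q : Fin K → Matrix (Fin nt) (Fin nt) ℂ)

-- `RBC` with every channel equal to `G` is the rate leaked to the eavesdropper.
theorem Rsec_eq_RBC_sub_RBC (k : Fin K) :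
    Rsec H G Q k = RBC H Q k - RBC (n := fun _ => ne) (fun _ => G) Q k := by
  rw [Rsec, RBC, RBC, sub_add]

theorem sum_ge_RBC_const (k : Fin K) :
    ∑ j with k ≤ j, RBC (n := fun _ => ne) (fun _ => G) Q j =
      logdetI (G * (∑ j with k ≤ j, Q j) * Gᴴ) := by
  have hsum : ∑ j with k ≤ j, RBC (n := fun _ => ne) (fun _ => G) Q j =
      logdetI (G * (∑ j with k ≤ j, Q j) * Gᴴ) - logdetI (G * (∑ j ∈ ∅, Q j) * Gᴴ) :=
    sum_ge_sub_filter_le_filter_lt (fun s => logdetI (G * (∑ j ∈ s, Q j) * Gᴴ)) k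
  rw [hsum, sum_empty, Matrix.mul_zero, Matrix.zero_mul, logdetI_zero, sub_zero]

theorem sum_ge_RMAC_le {Sg : ∀ k : Fin K, Matrix (Fin (n k)) (Fin (n k)) ℂ}
    (hSg : ∀ k, (Sg k).PosSemidef) (k : Fin K) :
    ∑ j with k ≤ j, RMAC H Sg j ≤ logdetI (∑ j with k ≤ j, (H j)ᴴ * Sg j * H j) := by
  have hpsd : ∀ s : Finset (Fin K), (∑ j ∈ s, (H j)ᴴ * Sg j * H j).PosSemidef := fun s =>
    posSemidef_sum s fun j _ => (hSg j).conjTranspose_mul_mul_same (H j)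
  have hsum : ∑ j with k ≤ j, RMAC H Sg j = logdetI (∑ j, (H j)ᴴ * Sg j * H j) -
      logdetI (∑ j with j < k, (H j)ᴴ * Sg j * H j) :=
    sum_ge_sub_filter_ge_filter_gt (fun s => logdetI (∑ j ∈ s, (H j)ᴴ * Sg j * H j)) k
  rw [hsum, ← sum_filter_add_sum_filter_not univ (· < k), sub_le_iff_le_add']
  simpa only [not_lt] using logdetI_add_le (hpsd {j | j < k}) (hpsd {j | ¬j < k})

end Rates

theorem tail_mac_dominates_eve_general {K nt ne : ℕ} {n : Fin K → ℕ}
    (H : ∀ k : Fin K, Matrix (Fin (n k)) (Fin nt) ℂ) (G : Matrix (Fin ne) (Fin nt) ℂ)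
    (Q : Fin K → Matrix (Fin nt) (Fin nt) ℂ)
    {Sg : ∀ k : Fin K, Matrix (Fin (n k)) (Fin (n k)) ℂ} (hSg : ∀ k, (Sg k).PosSemidef)
    {k : Fin K}
    (hleak : ∀ j, k ≤ j → RBC (n := fun _ => ne) (fun _ => G) Q j ≤ RMAC H Sg j) :
    logdetI (G * (∑ j with k ≤ j, Q j) * Gᴴ) ≤
      logdetI (∑ j with k ≤ j, (H j)ᴴ * Sg j * H j) :=
  calc
    logdetI (G * (∑ j with k ≤ j, Q j) * Gᴴ)
      = ∑ j with k ≤ j, RBC (n := fun _ => ne) (fun _ => G) Q j := (sum_ge_RBC_const G Q k).symm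
    _ ≤ ∑ j with k ≤ j, RMAC H Sg j := sum_le_sum fun j hj => hleak j (mem_filter.1 hj).2
    _ ≤ logdetI (∑ j with k ≤ j, (H j)ᴴ * Sg j * H j) := sum_ge_RMAC_le H hSg k

/-- If the MAC rates match the BC rates and all secrecy rates are nonnegative, then
the tail MAC log-determinant dominates the eavesdropper log-determinant. -/
theorem tail_mac_dominates_eve (K nt ne : ℕ) (hK : 1 ≤ K) (n : Fin K → ℕ)
    (H : ∀ k : Fin K, Matrix (Fin (n k)) (Fin nt) ℂ)
    (G : Matrix (Fin ne) (Fin nt) ℂ)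
    (Q : Fin K → Matrix (Fin nt) (Fin nt) ℂ) (hQ : ∀ k, (Q k).PosSemidef)
    (Sg : ∀ k : Fin K, Matrix (Fin (n k)) (Fin (n k)) ℂ)
    (hSg : ∀ k, (Sg k).PosSemidef)
    (hdual : ∀ j, RMAC H Sg j = RBC H Q j)
    (hsec : ∀ j, 0 ≤ Rsec H G Q j) :
    ∀ k : Fin K,
      logdetI (G * (∑ j ∈ Finset.univ.filter (fun j => k ≤ j), Q j) * Gᴴ) ≤
        logdetI (∑ j ∈ Finset.univ.filter (fun j => k ≤ j), (H j)ᴴ * Sg j * H j) := by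
  refine fun _ => tail_mac_dominates_eve_general H G Q hSg fun j _ => ?_
  exact hdual j ▸ sub_nonneg.1 (Rsec_eq_RBC_sub_RBC H G Q j ▸ hsec j)
end
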